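/- Let L > 0 and let ξ₁, …, ξ_d be real-valued random variables (not assumed independent) satisfying E exp(ξ_j²/L²) ≤ e for every j ∈ {1, …, d}. Then with probability strictly greater than 1/2, simultaneously for every j ∈ {1, …, d}, ξ_j^♯ ≤ √6·L·√(log(ed/j)); that is, Pr( max_{1 ≤ j ≤ d} ξ_j^♯/√(log(ed/j)) ≤ √6·L ) > 1/2. In particular, along the way one has, for every j, Pr( (1/j)∑_{k ≤ j} (ξ_k^♯)² ≥ 2L²·log(ed/j) ) ≤ j/(ed). -/

import Mathlib

open MeasureTheory

/-- The nonincreasing rearrangement of `(|t_j|)_{j=1}^d`. -/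
noncomputable def sharpOrd {d : ℕ} (t : Fin d → ℝ) : Fin d → ℝ :=
  fun i => |t (Tuple.sort (fun j => |t j|) i.rev)|

theorem sharpOrd_nonneg {d : ℕ} (t : Fin d → ℝ) (i : Fin d) : 0 ≤ sharpOrd t i :=
  abs_nonneg _

theorem sharpOrd_antitone {d : ℕ} (t : Fin d → ℝ) : Antitone (sharpOrd t) := fun _ _ h =>
  Tuple.monotone_sort (fun j => |t j|) (Fin.rev_le_rev.mpr h)

theorem sum_sharpOrd {d : ℕ} (t : Fin d → ℝ) (f : ℝ → ℝ) :
    ∑ k, f (sharpOrd t k) = ∑ k, f |t k| :=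
  Equiv.sum_comp (Fin.revPerm.trans (Tuple.sort fun j => |t j|)) fun k => f |t k|

theorem card_filter_val_le {d : ℕ} (j : Fin d) :
    (Finset.univ.filter fun k : Fin d => (k : ℕ) ≤ (j : ℕ)).card = (j : ℕ) + 1 := by
  rw [← Fin.card_Iic j]
  congr 1
  ext k
  simp

theorem sum_exp_sharpOrd_le {d : ℕ} (t : Fin d → ℝ) (L : ℝ) (s : Finset (Fin d)) :
    ∑ k ∈ s, Real.exp (sharpOrd t k ^ 2 / L ^ 2) ≤ ∑ k, Real.exp (t k ^ 2 / L ^ 2) := by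
  calc ∑ k ∈ s, Real.exp (sharpOrd t k ^ 2 / L ^ 2)
      ≤ ∑ k, Real.exp (sharpOrd t k ^ 2 / L ^ 2) :=
        Finset.sum_le_univ_sum_of_nonneg fun _ => (Real.exp_pos _).le
    _ = ∑ k, Real.exp (t k ^ 2 / L ^ 2) := by
        rw [sum_sharpOrd t fun x => Real.exp (x ^ 2 / L ^ 2)]
        exact Finset.sum_congr rfl fun k _ => by rw [sq_abs]

/-- A single order statistic is controlled by the sum of the exponentials. -/
theorem mul_exp_sharpOrd_le {d : ℕ} (t : Fin d → ℝ) (L : ℝ) (j : Fin d) :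
    ((j : ℕ) + 1 : ℝ) * Real.exp (sharpOrd t j ^ 2 / L ^ 2) ≤
      ∑ k, Real.exp (t k ^ 2 / L ^ 2) := by
  refine le_trans ?_
    (sum_exp_sharpOrd_le t L (Finset.univ.filter fun k : Fin d => (k : ℕ) ≤ (j : ℕ)))
  have h := Finset.card_nsmul_le_sum
    (Finset.univ.filter fun k : Fin d => (k : ℕ) ≤ (j : ℕ))
    (fun k => Real.exp (sharpOrd t k ^ 2 / L ^ 2)) (Real.exp (sharpOrd t j ^ 2 / L ^ 2)) ?_
  · rw [card_filter_val_le, nsmul_eq_mul] at h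
    exact_mod_cast h
  · intro k hk
    have hkj : sharpOrd t j ≤ sharpOrd t k := sharpOrd_antitone t (Finset.mem_filter.mp hk).2
    have h0 := sharpOrd_nonneg t j
    gcongr

/-- Jensen's inequality for the mean of the largest squares. -/
theorem mul_exp_mean_sharpOrd_le {d : ℕ} (t : Fin d → ℝ) (L : ℝ) (j : Fin d) :
    ((j : ℕ) + 1 : ℝ) * Real.exp ((1 / ((j : ℕ) + 1 : ℝ)) *
        (∑ k ∈ Finset.univ.filter (fun k : Fin d => (k : ℕ) ≤ (j : ℕ)), sharpOrd t k ^ 2) /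
          L ^ 2) ≤
      ∑ k, Real.exp (t k ^ 2 / L ^ 2) := by
  refine le_trans ?_
    (sum_exp_sharpOrd_le t L (Finset.univ.filter fun k : Fin d => (k : ℕ) ≤ (j : ℕ)))
  have hm : (0 : ℝ) < (j : ℕ) + 1 := by positivity
  have h := convexOn_exp.map_sum_le
    (t := Finset.univ.filter fun k : Fin d => (k : ℕ) ≤ (j : ℕ))
    (w := fun _ => 1 / ((j : ℕ) + 1 : ℝ)) (p := fun k => sharpOrd t k ^ 2 / L ^ 2)
    (fun _ _ => by positivity)
    (by
      rw [Finset.sum_const, card_filter_val_le, nsmul_eq_mul]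
      push_cast
      field_simp)
    (fun _ _ => Set.mem_univ _)
  simp only [smul_eq_mul, ← Finset.mul_sum, ← Finset.sum_div] at h
  rw [mul_div_assoc]
  calc _ ≤ _ := mul_le_mul_of_nonneg_left h hm.le
    _ = _ := by field_simp

theorem measure_le_sum_exp_le {d : ℕ} {Ω : Type*} [MeasurableSpace Ω] (P : Measure Ω)
    [IsProbabilityMeasure P] (L : ℝ) (ξ : Fin d → Ω → ℝ)
    (hint : ∀ j, Integrable (fun ω => Real.exp ((ξ j ω) ^ 2 / L ^ 2)) P)
    (hexp : ∀ j, ∫ ω, Real.exp ((ξ j ω) ^ 2 / L ^ 2) ∂P ≤ Real.exp 1) {a : ℝ} (ha : 0 < a) :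
    P {ω | a ≤ ∑ k, Real.exp (ξ k ω ^ 2 / L ^ 2)} ≤ ENNReal.ofReal (Real.exp 1 * d / a) := by
  have hmarkov := mul_meas_ge_le_integral_of_nonneg (μ := P)
    (f := fun ω => ∑ k, Real.exp (ξ k ω ^ 2 / L ^ 2))
    (Filter.Eventually.of_forall fun _ => Finset.sum_nonneg fun _ _ => (Real.exp_pos _).le)
    (integrable_finsetSum _ fun k _ => hint k) a
  have hsum : ∫ ω, ∑ k, Real.exp (ξ k ω ^ 2 / L ^ 2) ∂P ≤ Real.exp 1 * d := by
    rw [integral_finsetSum _ fun k _ => hint k]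
    calc _ ≤ ∑ _k : Fin d, Real.exp 1 := Finset.sum_le_sum fun k _ => hexp k
      _ = _ := by simp [mul_comm]
  rw [← ofReal_measureReal]
  apply ENNReal.ofReal_le_ofReal
  rw [le_div_iff₀ ha, mul_comm]
  exact hmarkov.trans hsum

theorem sharpOrd_le_of_sum_exp_lt {d : ℕ} (t : Fin d → ℝ) {L : ℝ} (hL : 0 < L)
    (ht : ∑ k, Real.exp (t k ^ 2 / L ^ 2) < Real.exp 1 * d * Real.exp 1 ^ 5) (j : Fin d) :
    sharpOrd t j ≤ Real.sqrt 6 * L *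
      Real.sqrt (Real.log (Real.exp 1 * (d : ℝ) / ((j : ℕ) + 1))) := by
  have hm : (0 : ℝ) < (j : ℕ) + 1 := by positivity
  have hjd : ((j : ℕ) + 1 : ℝ) ≤ d := by exact_mod_cast j.isLt
  have hd : (0 : ℝ) < d := hm.trans_le hjd
  set q : ℝ := Real.exp 1 * (d : ℝ) / ((j : ℕ) + 1) with hq
  have hqe : Real.exp 1 ≤ q := by
    rw [hq, le_div_iff₀ hm]
    gcongr
  have hq0 : 0 < q := (Real.exp_pos 1).trans_le hqe
  have hlog : 0 ≤ Real.log q :=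
    Real.log_nonneg ((Real.one_le_exp zero_le_one).trans hqe)
  by_contra! hlt
  have hsq : 6 * Real.log q ≤ sharpOrd t j ^ 2 / L ^ 2 := by
    rw [le_div_iff₀ (by positivity)]
    have h := pow_le_pow_left₀ (by positivity) hlt.le 2
    rw [mul_pow, mul_pow, Real.sq_sqrt (by norm_num), Real.sq_sqrt hlog] at h
    linarith
  have hpow : q ^ 6 ≤ Real.exp (sharpOrd t j ^ 2 / L ^ 2) := by
    refine le_trans (le_of_eq ?_) (Real.exp_le_exp.mpr hsq)
    rw [← Real.exp_log hq0, ← Real.exp_nat_mul, Real.log_exp]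
    norm_num
  refine absurd ht (not_lt.mpr ?_)
  calc Real.exp 1 * d * Real.exp 1 ^ 5 ≤ Real.exp 1 * d * q ^ 5 := by gcongr
    _ = ((j : ℕ) + 1) * q ^ 6 := by
        rw [pow_succ' q 5, ← mul_assoc, hq, mul_div_cancel₀ _ hm.ne']
    _ ≤ ((j : ℕ) + 1) * Real.exp (sharpOrd t j ^ 2 / L ^ 2) := by gcongr
    _ ≤ _ := mul_exp_sharpOrd_le t L j

theorem half_lt_measure_sum_exp_lt {d : ℕ} (hd : 0 < d) {Ω : Type*} [MeasurableSpace Ω]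
    (P : Measure Ω) [IsProbabilityMeasure P] (L : ℝ) (ξ : Fin d → Ω → ℝ)
    (hmeas : ∀ j, Measurable (ξ j))
    (hint : ∀ j, Integrable (fun ω => Real.exp ((ξ j ω) ^ 2 / L ^ 2)) P)
    (hexp : ∀ j, ∫ ω, Real.exp ((ξ j ω) ^ 2 / L ^ 2) ∂P ≤ Real.exp 1) :
    (1 / 2 : ENNReal) <
      P {ω | ∑ k, Real.exp (ξ k ω ^ 2 / L ^ 2) < Real.exp 1 * d * Real.exp 1 ^ 5} := by
  have hd' : (0 : ℝ) < d := by exact_mod_cast hd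
  have hS : Measurable fun ω => ∑ k, Real.exp (ξ k ω ^ 2 / L ^ 2) := by fun_prop
  have hbad : P.real {ω | Real.exp 1 * d * Real.exp 1 ^ 5 ≤
      ∑ k, Real.exp (ξ k ω ^ 2 / L ^ 2)} < 1 / 2 := by
    have h := measure_le_sum_exp_le P L ξ hint hexp
      (show 0 < Real.exp 1 * d * Real.exp 1 ^ 5 by positivity)
    refine (ENNReal.toReal_le_of_le_ofReal (by positivity) h).trans_lt ?_
    rw [div_lt_iff₀ (by positivity)]
    have he : (2 : ℝ) < Real.exp 1 := by linarith [Real.exp_one_gt_d9]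
    have he5 : (2 : ℝ) ^ 5 < Real.exp 1 ^ 5 := by gcongr
    have hpos : 0 < Real.exp 1 * d := by positivity
    nlinarith
  have hcompl := probReal_compl_eq_one_sub (μ := P)
    (measurableSet_le measurable_const hS :
      MeasurableSet {ω | Real.exp 1 * d * Real.exp 1 ^ 5 ≤ ∑ k, Real.exp (ξ k ω ^ 2 / L ^ 2)})
  simp only [Set.compl_ofPred, not_le] at hcompl
  rw [← ofReal_measureReal, hcompl,
    show (1 / 2 : ENNReal) = ENNReal.ofReal (1 / 2) by
      rw [ENNReal.ofReal_div_of_pos two_pos]; simp]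
  exact (ENNReal.ofReal_lt_ofReal_iff (by linarith)).mpr (by linarith)

/-- if `𝔼 exp(ξ_j²/L²) ≤ e` for each of `d` (not necessarily independent)
random variables `ξ_j`, then with probability strictly greater than `1/2`,
simultaneously for every `j`, `ξ_j^♯ ≤ √6 L √(log(ed/j))`; along the way, for every `j`,
`Pr((1/j)∑_{k ≤ j}(ξ_k^♯)² ≥ 2L² log(ed/j)) ≤ j/(ed)`. (The `1`-based index `j`
corresponds to `(j : ℕ) + 1` for `j : Fin d`.) -/
theorem stmt16 (d : ℕ) {Ω : Type*} [MeasurableSpace Ω] (P : Measure Ω)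
    [IsProbabilityMeasure P]
    (L : ℝ) (hL : 0 < L) (ξ : Fin d → Ω → ℝ) (hmeas : ∀ j, Measurable (ξ j))
    (hint : ∀ j, Integrable (fun ω => Real.exp ((ξ j ω) ^ 2 / L ^ 2)) P)
    (hexp : ∀ j, ∫ ω, Real.exp ((ξ j ω) ^ 2 / L ^ 2) ∂P ≤ Real.exp 1) :
    (1 / 2 : ENNReal) <
      P {ω | ∀ j : Fin d, sharpOrd (fun k => ξ k ω) j ≤
        Real.sqrt 6 * L *
          Real.sqrt (Real.log (Real.exp 1 * (d : ℝ) / ((j : ℕ) + 1)))} ∧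
    ∀ j : Fin d,
      P {ω | 2 * L ^ 2 * Real.log (Real.exp 1 * (d : ℝ) / ((j : ℕ) + 1)) ≤
          (1 / ((j : ℕ) + 1 : ℝ)) *
            ∑ k ∈ Finset.univ.filter (fun k : Fin d => (k : ℕ) ≤ (j : ℕ)),
              (sharpOrd (fun l => ξ l ω) k) ^ 2} ≤
        ENNReal.ofReal (((j : ℕ) + 1) / (Real.exp 1 * d)) := by
  constructor
  · rcases Nat.eq_zero_or_pos d with rfl | hd
    · simp
    · exact (half_lt_measure_sum_exp_lt hd P L ξ hmeas hint hexp).trans_le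
        (measure_mono fun ω hω j => sharpOrd_le_of_sum_exp_lt (fun k => ξ k ω) hL hω j)
  · intro j
    have hm : (0 : ℝ) < (j : ℕ) + 1 := by positivity
    have hd : (0 : ℝ) < d := by exact_mod_cast j.pos
    set q : ℝ := Real.exp 1 * (d : ℝ) / ((j : ℕ) + 1) with hq
    have hq0 : 0 < q := by positivity
    have h := measure_le_sum_exp_le P L ξ hint hexp
      (show 0 < ((j : ℕ) + 1 : ℝ) * q ^ 2 by positivity)
    have hval : Real.exp 1 * d / (((j : ℕ) + 1 : ℝ) * q ^ 2) =
        ((j : ℕ) + 1) / (Real.exp 1 * d) := by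
      rw [hq]
      field_simp
    rw [hval] at h
    refine (measure_mono fun ω hω => ?_).trans h
    rw [Set.mem_ofPred_eq] at hω ⊢
    refine le_trans ?_ (mul_exp_mean_sharpOrd_le (fun k => ξ k ω) L j)
    gcongr
    rw [← Real.log_le_iff_le_exp (by positivity), Real.log_pow, le_div_iff₀ (by positivity)]
    push_cast
    linarith
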